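/- arXiv:2511.02705 — 3 statements merged into one kernel-verified Lean document; each statement's English description precedes it below -/
import Mathlib

section
/- Let G be a FriendlyCC instance (a ConstrainedCC instance with H = ∅) in consistent form, (X⁺, X⁻) a feasible solution of the friendly covering LP with induced edge values x, and Ĝ the friendly auxiliary graph. Then every bad triangle abc of Ĝ (ab, bc ∈ Ê⁺ and ac ∈ Ê⁻, with a, b, c distinct) satisfies x_{ab} + x_{bc} + x_{ac} ≥ 1. -/
/-!
A bad triangle `abc` of `Ĝ` meets three distinct supernodes: if `a, b` or `b, c` shared
a supernode, then `ac` would have the LP values of a positive edge, and if `a, c` did, then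
`X⁺_{ac} = 0 < 1 = X⁻_{ac}`, so `ac` would be positive.  So
`X⁺_{ab} + X⁺_{bc} + X⁻_{ac} ≥ 1` is an LP constraint.  As `Ĝ` gives each edge the sign with
the smaller LP variable, this sum is at most `x_{ab} + x_{bc} + x_{ac}`.
-/

open scoped Classical

namespace CCC

/-- A Constrained Correlation Clustering instance: a partition of the unordered
pairs of distinct vertices into positive edges `Ep` and negative edges `En`,
together with friendly constraints `F` and hostile constraints `H`. -/
structure CCInst (V : Type*) where
  Ep : Finset (Sym2 V)
  En : Finset (Sym2 V)
  F : Finset (Sym2 V)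
  H : Finset (Sym2 V)
  mem_Ep_iff : ∀ e : Sym2 V, e ∈ Ep ↔ (¬ e.IsDiag ∧ e ∉ En)
  not_isDiag_of_mem_En : ∀ e ∈ En, ¬ e.IsDiag
  not_isDiag_of_mem_F : ∀ e ∈ F, ¬ e.IsDiag
  not_isDiag_of_mem_H : ∀ e ∈ H, ¬ e.IsDiag

variable {V : Type*} [Fintype V] [DecidableEq V]

/-- `u` and `v` lie in the same supernode (connected component of `(V, F)`). -/
def sameSuper (G : CCInst V) (u v : V) : Prop :=
  Relation.ReflTransGen (fun a b => s(a, b) ∈ G.F) u v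

/-- The (distinct) supernodes of `u` and `v` are hostile. -/
def hostileSuper (G : CCInst V) (u v : V) : Prop :=
  ¬ sameSuper G u v ∧ ∃ a b : V, sameSuper G u a ∧ sameSuper G v b ∧ s(a, b) ∈ G.H

/-- A clustering is feasible if it merges all friendly pairs and separates all hostile pairs. -/
def Feasible (G : CCInst V) {L : Type*} (C : V → L) : Prop :=
  (∀ u v : V, s(u, v) ∈ G.F → C u = C v) ∧ ∀ u v : V, s(u, v) ∈ G.H → C u ≠ C v

/-- The cost of a clustering: positive edges cut plus negative edges not cut. -/
noncomputable def cost (G : CCInst V) {L : Type*} (C : V → L) : ℕ :=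
  (G.Ep.filter fun e => ¬ (e.map C).IsDiag).card +
    (G.En.filter fun e => (e.map C).IsDiag).card

/-- `G` is in consistent form. -/
def ConsistentForm (G : CCInst V) : Prop :=
  (∀ u v : V, u ≠ v → sameSuper G u v → s(u, v) ∈ G.Ep) ∧
    ∀ u v : V, hostileSuper G u v → s(u, v) ∈ G.En

/-- `G` is the consistent form of `G0`. -/
def IsConsistentFormOf (G G0 : CCInst V) : Prop :=
  G.F = G0.F ∧ G.H = G0.H ∧
    ∀ u v : V, u ≠ v →
      (sameSuper G0 u v → s(u, v) ∈ G.Ep) ∧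
      (hostileSuper G0 u v → s(u, v) ∈ G.En) ∧
      (¬ sameSuper G0 u v → ¬ hostileSuper G0 u v → (s(u, v) ∈ G.Ep ↔ s(u, v) ∈ G0.Ep))

/-- `(e, f)` is a dangerous pair: `e = ab`, `f = cd` are positive edges with
`s(b) = s(c)` and `(S(a), S(d)) ∈ H`. -/
def IsDangerousPair (G : CCInst V) (e f : Sym2 V) : Prop :=
  ∃ a b c d : V, e = s(a, b) ∧ f = s(c, d) ∧ e ∈ G.Ep ∧ f ∈ G.Ep ∧
    sameSuper G b c ∧ hostileSuper G a d

/-- The edge `e` occurs in the pair `p`. -/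
def InPair (e : Sym2 V) (p : Sym2 V × Sym2 V) : Prop := e = p.1 ∨ e = p.2

/-- Every edge occurs in at most one member of `D`. -/
def EdgeDisjoint (D : Finset (Sym2 V × Sym2 V)) : Prop :=
  ∀ p ∈ D, ∀ q ∈ D, ∀ e : Sym2 V, InPair e p → InPair e q → p = q

/-- `D` is an edge-disjoint set of dangerous pairs. -/
def DangerousFamily (G : CCInst V) (D : Finset (Sym2 V × Sym2 V)) : Prop :=
  (∀ p ∈ D, IsDangerousPair G p.1 p.2) ∧ EdgeDisjoint D

/-- `D` is a maximal edge-disjoint set of dangerous pairs. -/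
def MaximalDangerous (G : CCInst V) (D : Finset (Sym2 V × Sym2 V)) : Prop :=
  DangerousFamily G D ∧
    ∀ e f : Sym2 V, IsDangerousPair G e f → EdgeDisjoint (insert (e, f) D) → (e, f) ∈ D

/-- `E_𝒟`: the set of edges occurring in members of `D`. -/
def EDset (D : Finset (Sym2 V × Sym2 V)) : Set (Sym2 V) :=
  {e | ∃ p ∈ D, InPair e p}

/-- `f` is the partner edge `ρ(e)` of `e` in `D`. -/
def Partner (D : Finset (Sym2 V × Sym2 V)) (e f : Sym2 V) : Prop :=
  (e, f) ∈ D ∨ (f, e) ∈ D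

/-- The induced edge value `x_{uv}` of an LP solution. -/
noncomputable def xval (G : CCInst V) (Xp Xn : Sym2 V → ℝ) (e : Sym2 V) : ℝ :=
  if e ∈ G.Ep then Xp e else Xn e

/-- The LP objective value `∑_{uv} x_{uv}`, summed over all unordered pairs of
distinct vertices. -/
noncomputable def lpObj (G : CCInst V) (Xp Xn : Sym2 V → ℝ) : ℝ :=
  ∑ e ∈ Finset.univ.filter (fun e : Sym2 V => ¬ e.IsDiag), xval G Xp Xn e

/-- `(Xp, Xn)` is a feasible solution of the constrained covering LP (with
HEAP constraints coming from the dangerous pairs `D`).  The variables are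
indexed by unordered pairs of vertices but must only depend on the pair of
supernodes of the endpoints. -/
structure IsLPSol (G : CCInst V) (D : Finset (Sym2 V × Sym2 V))
    (Xp Xn : Sym2 V → ℝ) : Prop where
  nonneg_p : ∀ e : Sym2 V, 0 ≤ Xp e
  nonneg_n : ∀ e : Sym2 V, 0 ≤ Xn e
  congr_p : ∀ u v u' v' : V, sameSuper G u u' → sameSuper G v v' →
    Xp s(u, v) = Xp s(u', v')
  congr_n : ∀ u v u' v' : V, sameSuper G u u' → sameSuper G v v' →
    Xn s(u, v) = Xn s(u', v')
  same_p : ∀ u v : V, sameSuper G u v → Xp s(u, v) = 0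
  same_n : ∀ u v : V, sameSuper G u v → Xn s(u, v) = 1
  host_n : ∀ u v : V, hostileSuper G u v → Xn s(u, v) = 0
  host_p : ∀ u v : V, hostileSuper G u v → Xp s(u, v) = 1
  tri_ppn : ∀ a b c : V, ¬ sameSuper G a b → ¬ sameSuper G b c → ¬ sameSuper G a c →
    1 ≤ Xp s(a, b) + Xp s(b, c) + Xn s(a, c)
  tri_pnp : ∀ a b c : V, ¬ sameSuper G a b → ¬ sameSuper G b c → ¬ sameSuper G a c →
    1 ≤ Xp s(a, b) + Xn s(b, c) + Xp s(a, c)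
  tri_npp : ∀ a b c : V, ¬ sameSuper G a b → ¬ sameSuper G b c → ¬ sameSuper G a c →
    1 ≤ Xn s(a, b) + Xp s(b, c) + Xp s(a, c)
  pair : ∀ u v : V, 1 ≤ Xp s(u, v) + Xn s(u, v)
  heap : ∀ a b c k l : V, s(a, b) ∈ G.Ep → s(b, c) ∈ G.Ep → s(a, c) ∈ G.Ep →
    ¬ sameSuper G a b → ¬ sameSuper G c b → s(a, c) ∈ EDset D →
    Partner D s(a, c) s(k, l) →
    1 ≤ xval G Xp Xn s(a, b) + xval G Xp Xn s(b, c) + xval G Xp Xn s(k, l)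

/-- `uv ∈ Ê⁺`: positive edges of the auxiliary graph `Ĝ`. -/
def hatPos (G : CCInst V) (D : Finset (Sym2 V × Sym2 V)) (Xp Xn : Sym2 V → ℝ)
    (u v : V) : Prop :=
  u ≠ v ∧ (sameSuper G u v ∨
    ((∃ a b : V, sameSuper G u a ∧ sameSuper G v b ∧ s(a, b) ∈ G.Ep ∧ s(a, b) ∉ EDset D) ∧
      Xp s(u, v) < min (Xn s(u, v)) (2 / 3)))

/-- `uv ∈ Ê⁻`: negative edges of the auxiliary graph `Ĝ`. -/
def hatNeg (G : CCInst V) (D : Finset (Sym2 V × Sym2 V)) (Xp Xn : Sym2 V → ℝ)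
    (u v : V) : Prop :=
  u ≠ v ∧ ¬ hatPos G D Xp Xn u v

/-- `Ê⁺` as a predicate on unordered pairs. -/
def hatPosE (G : CCInst V) (D : Finset (Sym2 V × Sym2 V)) (Xp Xn : Sym2 V → ℝ)
    (e : Sym2 V) : Prop :=
  ∃ u v : V, e = s(u, v) ∧ hatPos G D Xp Xn u v

/-- `Ê⁻` as a predicate on unordered pairs. -/
def hatNegE (G : CCInst V) (D : Finset (Sym2 V × Sym2 V)) (Xp Xn : Sym2 V → ℝ)
    (e : Sym2 V) : Prop :=
  ¬ e.IsDiag ∧ ¬ hatPosE G D Xp Xn e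

/-- `E^{+-} = E⁺ ∩ Ê⁻`. -/
noncomputable def Epm (G : CCInst V) (D : Finset (Sym2 V × Sym2 V)) (Xp Xn : Sym2 V → ℝ) :
    Finset (Sym2 V) :=
  G.Ep.filter fun e => hatNegE G D Xp Xn e

/-- The balanced edges `E^b ⊆ E^{+-}`. -/
noncomputable def Eb (G : CCInst V) (D : Finset (Sym2 V × Sym2 V)) (Xp Xn : Sym2 V → ℝ) :
    Finset (Sym2 V) :=
  (Epm G D Xp Xn).filter fun e =>
    e ∈ EDset D ∧ ∀ f : Sym2 V, Partner D e f → f ∈ Epm G D Xp Xn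

/-- The other flipped positive edges `E^o = E^{+-} \ E^b`. -/
noncomputable def Eo (G : CCInst V) (D : Finset (Sym2 V × Sym2 V)) (Xp Xn : Sym2 V → ℝ) :
    Finset (Sym2 V) :=
  Epm G D Xp Xn \ Eb G D Xp Xn

/-- A signed graph (given by its positive-edge relation `pos`) is pivot-safe for `G`. -/
def PivotSafe (G : CCInst V) (pos : V → V → Prop) : Prop :=
  (∀ i j : V, i ≠ j → sameSuper G i j →
    pos i j ∧ ∀ k : V, k ≠ i → k ≠ j → (pos i k ↔ pos j k)) ∧
  ∀ i j : V, hostileSuper G i j → ¬ pos i j ∧ ∀ k : V, ¬ (pos i k ∧ pos j k)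

/-- `PivotClust pos S C`: the assignment `C` (mapping every vertex of `S` to
the pivot of its cluster) is obtainable by running the pivot procedure on the
vertex set `S` of the signed graph whose positive edges are given by `pos`. -/
inductive PivotClust (pos : V → V → Prop) : Finset V → (V → V) → Prop where
  | nil (C : V → V) : PivotClust pos ∅ C
  | step (S : Finset V) (p : V) (C : V → V) (hp : p ∈ S)
      (h : PivotClust pos (S.filter fun v => ¬ (v = p ∨ pos p v)) C) :
      PivotClust pos S (fun v => if v ∈ S ∧ (v = p ∨ pos p v) then p else C v)

/-- `T_p⁺` inside the vertex subset `W`. -/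
noncomputable def Tpos (G : CCInst V) (D : Finset (Sym2 V × Sym2 V)) (Xp Xn : Sym2 V → ℝ)
    (W : Finset V) (p : V) : Finset (Sym2 V) :=
  Finset.univ.filter fun e : Sym2 V => ∃ u v : V, e = s(u, v) ∧ u ∈ W ∧ v ∈ W ∧
    hatPos G D Xp Xn u v ∧ hatPos G D Xp Xn p u ∧ hatNeg G D Xp Xn p v

/-- `T_p⁻` inside the vertex subset `W`. -/
noncomputable def Tneg (G : CCInst V) (D : Finset (Sym2 V × Sym2 V)) (Xp Xn : Sym2 V → ℝ)
    (W : Finset V) (p : V) : Finset (Sym2 V) :=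
  Finset.univ.filter fun e : Sym2 V => ∃ u v : V, e = s(u, v) ∧ u ∈ W ∧ v ∈ W ∧
    hatNeg G D Xp Xn u v ∧ hatPos G D Xp Xn p u ∧ hatPos G D Xp Xn p v

/-- `A_p⁻ = T_p⁻ \ E^b`. -/
noncomputable def Aneg (G : CCInst V) (D : Finset (Sym2 V × Sym2 V)) (Xp Xn : Sym2 V → ℝ)
    (W : Finset V) (p : V) : Finset (Sym2 V) :=
  (Tneg G D Xp Xn W p).filter fun e => e ∉ Eb G D Xp Xn

/-- `B_p⁻ = T_p⁻ ∩ E^b`. -/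
noncomputable def Bneg (G : CCInst V) (D : Finset (Sym2 V × Sym2 V)) (Xp Xn : Sym2 V → ℝ)
    (W : Finset V) (p : V) : Finset (Sym2 V) :=
  (Tneg G D Xp Xn W p).filter fun e => e ∈ Eb G D Xp Xn

/-- `(Xp, Xn)` is a feasible solution of the friendly covering LP (no hostile
constraints and no HEAP constraints). -/
structure IsFriendlyLPSol (G : CCInst V) (Xp Xn : Sym2 V → ℝ) : Prop where
  nonneg_p : ∀ e : Sym2 V, 0 ≤ Xp e
  nonneg_n : ∀ e : Sym2 V, 0 ≤ Xn e
  congr_p : ∀ u v u' v' : V, sameSuper G u u' → sameSuper G v v' →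
    Xp s(u, v) = Xp s(u', v')
  congr_n : ∀ u v u' v' : V, sameSuper G u u' → sameSuper G v v' →
    Xn s(u, v) = Xn s(u', v')
  same_p : ∀ u v : V, sameSuper G u v → Xp s(u, v) = 0
  same_n : ∀ u v : V, sameSuper G u v → Xn s(u, v) = 1
  tri_ppn : ∀ a b c : V, ¬ sameSuper G a b → ¬ sameSuper G b c → ¬ sameSuper G a c →
    1 ≤ Xp s(a, b) + Xp s(b, c) + Xn s(a, c)
  tri_pnp : ∀ a b c : V, ¬ sameSuper G a b → ¬ sameSuper G b c → ¬ sameSuper G a c →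
    1 ≤ Xp s(a, b) + Xn s(b, c) + Xp s(a, c)
  tri_npp : ∀ a b c : V, ¬ sameSuper G a b → ¬ sameSuper G b c → ¬ sameSuper G a c →
    1 ≤ Xn s(a, b) + Xp s(b, c) + Xp s(a, c)
  pair : ∀ u v : V, 1 ≤ Xp s(u, v) + Xn s(u, v)

/-- `(e, f)` is a dangerous triangle in a HostileCC instance: positive edges
`e = ab`, `f = bc` with `ac ∈ H`. -/
def IsDangerousTriangle (G : CCInst V) (e f : Sym2 V) : Prop :=
  ∃ a b c : V, e = s(a, b) ∧ f = s(b, c) ∧ e ∈ G.Ep ∧ f ∈ G.Ep ∧ s(a, c) ∈ G.H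

/-- In the friendly auxiliary graph (`uv ∈ Ê⁺` iff
`X⁻_{S(u)S(v)} ≥ X⁺_{S(u)S(v)}`), every bad triangle `abc` satisfies
`x_{ab} + x_{bc} + x_{ac} ≥ 1`. -/
theorem stmt15 {V : Type*} [Fintype V] [DecidableEq V] (G : CCInst V)
    (Xp Xn : Sym2 V → ℝ)
    (hH : G.H = ∅)
    (hcons : ∀ u v : V, u ≠ v → sameSuper G u v → s(u, v) ∈ G.Ep)
    (hsol : IsFriendlyLPSol G Xp Xn)
    (a b c : V) (hab' : a ≠ b) (hbc' : b ≠ c) (hac' : a ≠ c)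
    (hab : Xp s(a, b) ≤ Xn s(a, b)) (hbc : Xp s(b, c) ≤ Xn s(b, c))
    (hac : Xn s(a, c) < Xp s(a, c)) :
    1 ≤ xval G Xp Xn s(a, b) + xval G Xp Xn s(b, c) + xval G Xp Xn s(a, c) := by
  -- If `ab` (or `bc`) lay inside a supernode, then `bc` (or `ab`) and `ac` would carry
  -- the same LP values, although these two edges have opposite signs in `Ĝ`.
  have nab : ¬ sameSuper G a b := fun h => by
    have h1 := hsol.congr_p a c b c h .refl
    have h2 := hsol.congr_n a c b c h .refl
    linarith
  have nbc : ¬ sameSuper G b c := fun h => by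
    have h1 := hsol.congr_p a b a c .refl h
    have h2 := hsol.congr_n a b a c .refl h
    linarith
  have nac : ¬ sameSuper G a c := fun h => by
    have h1 := hsol.same_p a c h
    have h2 := hsol.same_n a c h
    linarith
  -- By the definition of `Ĝ`, each induced value is at least the one of `Xp`, `Xn`
  -- that appears in the triangle constraint for the supernodes of `a`, `b`, `c`.
  have h := hsol.tri_ppn a b c nab nbc nac
  unfold xval
  split_ifs <;> linarith


end CCC
end

section
/- Let G be a HostileCC instance (a ConstrainedCC instance with F = ∅, so supernodes are singletons) with H ⊆ E⁻, and let 𝒟 be a maximal edge-disjoint set of dangerous triangles of G, i.e., pairs of positive edges (ab, bc) with ac ∈ H. Let Ĝ = (V, E⁺ \ E_𝒟, E⁻ ∪ E_𝒟) be the signed graph obtained from G by flipping all edges of E_𝒟 from positive to negative. Then there is no triple of vertices i, j, k with ij ∈ H, ik ∈ E⁺ \ E_𝒟, and jk ∈ E⁺ \ E_𝒟; consequently every pivot clustering of Ĝ, for any choice of pivot vertices, is a feasible clustering for G. -/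
/-!
The first claim is maximality: if `ik` and `jk` were positive edges outside `E_𝒟` with `ij ∈ H`,
then `(ik, kj)` would be a dangerous triangle sharing no edge with any member of `𝒟`, so it could be
added to `𝒟`; maximality then puts it in `𝒟`, and `ik ∈ E_𝒟` after all
(`mem_EDset_or_of_dangerous`).

Two vertices get the same label only if they fall into the cluster of the same pivot `p`. If neither
is `p`, they are joined to `p` by two positive edges of the flipped graph, which the first claim
forbids for a hostile pair; if one of them is `p`, the pair is itself a positive edge, whereas
`H ⊆ E⁻`. This is an induction along the pivot procedure (`PivotClust.ne_of_hostile`), which also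
needs that labels are pivots taken from the vertex set being clustered (`PivotClust.map_mem`), so
that the label `p` is not reused after its cluster has been removed.
-/

open scoped Classical

namespace CCC

variable {V : Type*} [Fintype V] [DecidableEq V]

/-- Under maximality, every dangerous triangle meets `E_𝒟`. -/
theorem mem_EDset_or_of_dangerous {V : Type*} [DecidableEq V] {G : CCInst V}
    {D : Finset (Sym2 V × Sym2 V)}
    (hdisj : EdgeDisjoint D)
    (hmax : ∀ e f : Sym2 V, IsDangerousTriangle G e f →
      EdgeDisjoint (insert (e, f) D) → (e, f) ∈ D)
    {e f : Sym2 V} (h : IsDangerousTriangle G e f) : e ∈ EDset D ∨ f ∈ EDset D := by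
  by_contra! hn
  obtain ⟨he, hf⟩ := hn
  have key : ∀ q ∈ D, ∀ x, InPair x (e, f) → ¬ InPair x q := by
    rintro q hq x (rfl | rfl) hx
    · exact he ⟨q, hq, hx⟩
    · exact hf ⟨q, hq, hx⟩
  refine he ⟨(e, f), hmax e f h fun p hp q hq x hxp hxq => ?_, Or.inl rfl⟩
  rcases Finset.mem_insert.1 hp with rfl | hp <;> rcases Finset.mem_insert.1 hq with rfl | hq
  · rfl
  · exact (key q hq x hxp hxq).elim
  · exact (key p hp x hxq hxp).elim
  · exact hdisj p hp q hq x hxp hxq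

theorem PivotClust.map_mem {V : Type*} [DecidableEq V] {pos : V → V → Prop}
    {S : Finset V} {C : V → V} (h : PivotClust pos S C) : ∀ v ∈ S, C v ∈ S := by
  induction h with
  | nil C => simp
  | step S p C hp h ih =>
    intro v hv
    by_cases hc : v = p ∨ pos p v
    · simpa [hv, hc] using hp
    · simpa [hv, hc] using (Finset.mem_filter.1 (ih v (Finset.mem_filter.2 ⟨hv, hc⟩))).1

/-- Pivoting separates any two distinct vertices that are not adjacent and have no common
neighbour in `pos`. Adjacency is required to fail in both directions because `pos` is not assumed
to be symmetric. -/
theorem PivotClust.ne_of_hostile {V : Type*} [DecidableEq V] {pos : V → V → Prop}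
    {S : Finset V} {C : V → V} (h : PivotClust pos S C) {u v : V} (huv : u ≠ v)
    (h1 : ¬ pos u v) (h2 : ¬ pos v u) (h3 : ∀ p, ¬ (pos p u ∧ pos p v)) :
    u ∈ S → v ∈ S → C u ≠ C v := by
  induction h with
  | nil C => simp
  | step S p C hp h ih =>
    intro hu hv
    -- a vertex outside the cluster of `p` is labelled by a vertex outside that cluster
    have hne : ∀ w ∈ S, ¬ (w = p ∨ pos p w) → C w ≠ p := fun w hw hc heq =>
      (Finset.mem_filter.1 (h.map_mem w (Finset.mem_filter.2 ⟨hw, hc⟩))).2 (Or.inl heq)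
    by_cases hcu : u = p ∨ pos p u <;> by_cases hcv : v = p ∨ pos p v
    · exfalso
      rcases hcu with rfl | hcu <;> rcases hcv with rfl | hcv
      · exact huv rfl
      · exact h1 hcv
      · exact h2 hcu
      · exact h3 p ⟨hcu, hcv⟩
    · simpa [hu, hv, hcu, hcv] using (hne v hv hcv).symm
    · simpa [hu, hv, hcu, hcv] using hne u hu hcu
    · simpa [hu, hv, hcu, hcv] using
        ih (Finset.mem_filter.2 ⟨hu, hcu⟩) (Finset.mem_filter.2 ⟨hv, hcv⟩)

/-- For a HostileCC instance (`F = ∅`, `H ⊆ E⁻`) and a maximal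
edge-disjoint set `D` of dangerous triangles, the graph obtained by flipping all
edges of `E_𝒟` to negative contains no triple `i, j, k` with `ij ∈ H` and
`ik, jk ∈ E⁺ \ E_𝒟`; consequently every pivot clustering of this flipped graph
is a feasible clustering for `G`. -/
theorem stmt17 {V : Type*} [Fintype V] [DecidableEq V] (G : CCInst V)
    (hF : G.F = ∅) (hHn : ∀ e ∈ G.H, e ∈ G.En)
    (D : Finset (Sym2 V × Sym2 V))
    (hdang : ∀ p ∈ D, IsDangerousTriangle G p.1 p.2)
    (hdisj : EdgeDisjoint D)
    (hmax : ∀ e f : Sym2 V, IsDangerousTriangle G e f →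
      EdgeDisjoint (insert (e, f) D) → (e, f) ∈ D) :
    (¬ ∃ i j k : V, s(i, j) ∈ G.H ∧
        (s(i, k) ∈ G.Ep ∧ s(i, k) ∉ EDset D) ∧
        (s(j, k) ∈ G.Ep ∧ s(j, k) ∉ EDset D)) ∧
      ∀ C : V → V,
        PivotClust (fun u v => s(u, v) ∈ G.Ep ∧ s(u, v) ∉ EDset D) Finset.univ C →
          Feasible G C := by
  have hno : ¬ ∃ i j k : V, s(i, j) ∈ G.H ∧
      (s(i, k) ∈ G.Ep ∧ s(i, k) ∉ EDset D) ∧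
      (s(j, k) ∈ G.Ep ∧ s(j, k) ∉ EDset D) := by
    rintro ⟨i, j, k, hij, ⟨hik, hik'⟩, hjk, hjk'⟩
    exact (mem_EDset_or_of_dangerous hdisj hmax
      ⟨i, k, j, rfl, Sym2.eq_swap, hik, hjk, hij⟩).elim hik' hjk'
  refine ⟨hno, fun C hC => ⟨fun u v h => by simp [hF] at h, fun u v huv => ?_⟩⟩
  have hEp : s(u, v) ∉ G.Ep := fun h => ((G.mem_Ep_iff _).1 h).2 (hHn _ huv)
  refine hC.ne_of_hostile (fun h => G.not_isDiag_of_mem_H _ huv (Sym2.mk_isDiag_iff.2 h))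
    (fun h => hEp h.1) (fun h => hEp (Sym2.eq_swap ▸ h.1)) (fun p ⟨hu, hv⟩ => ?_)
    (Finset.mem_univ u) (Finset.mem_univ v)
  rw [Sym2.eq_swap] at hu hv
  exact hno ⟨u, v, p, huv, hu, hv⟩

end CCC
end

section
/- Let Ĝ = (W, Ê⁺, Ê⁻) be a finite signed complete graph (a partition of all unordered vertex pairs of W into Ê⁺ and Ê⁻) and let 𝒯(Ĝ) be its set of bad triangles. For each p ∈ W let T_p⁺ = {uv ∈ Ê⁺ : pu ∈ Ê⁺ and pv ∈ Ê⁻} and T_p⁻ = {uv ∈ Ê⁻ : pu ∈ Ê⁺ and pv ∈ Ê⁺}. Then Σ_{p ∈ W} |T_p⁺| = 2|𝒯(Ĝ)| and Σ_{p ∈ W} |T_p⁻| = |𝒯(Ĝ)|. -/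
/-!
Double counting of pairs `(p, e)` with `e` in `T_p⁺` (or `T_p⁻`), grouped by the vertex set
`p ∪ e`, which is always a bad triangle. A bad triangle has two positive edges `ab`, `bc` and the
negative edge `ac`. Each of its positive edges lies in `T_p⁺` for the opposite vertex `p`, so it
arises from exactly the two pairs `(a, bc)` and `(c, ab)` in the first count; its negative edge
lies in `T_p⁻` for the opposite vertex, so it arises from exactly the pair `(b, ac)` in the second.
The lemma `sum_card_eq_mul_of_fibers` is the double count; the theorem supplies the fibers.
-/

open scoped Classical

namespace CCC

variable {V : Type*} [Fintype V] [DecidableEq V]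

/-- Double counting: if every pair `(p, e)` with `e ∈ S p` spans a member of `T`, and every member
of `T` is spanned by exactly `k` such pairs, then `∑ p, |S p| = k |T|`. -/
lemma sum_card_eq_mul_of_fibers {W : Type*} [Fintype W] [DecidableEq W]
    (S : W → Finset (Sym2 W)) (T : Finset (Finset W)) (k : ℕ)
    (hmap : ∀ p, ∀ e ∈ S p, insert p e.toFinset ∈ T)
    (hfib : ∀ t ∈ T, ∃ A : Finset (Σ _ : W, Sym2 W), A.card = k ∧
      ∀ p e, (⟨p, e⟩ : Σ _ : W, Sym2 W) ∈ A ↔ e ∈ S p ∧ insert p e.toFinset = t) :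
    ∑ p, (S p).card = k * T.card := by
  rw [← Finset.card_sigma, Finset.card_eq_sum_card_fiberwise
    (f := fun x : Σ _ : W, Sym2 W => insert x.1 x.2.toFinset) (t := T)
    (by rintro ⟨p, e⟩ h; exact hmap p e (by simpa using h)),
    Finset.sum_congr rfl (g := fun _ => k), Finset.sum_const, smul_eq_mul, mul_comm]
  intro t ht
  obtain ⟨A, hA, h⟩ := hfib t ht
  rw [← hA]
  congr 1
  ext ⟨p, e⟩
  simp [h]

/-- If `p`, `u`, `v` span `{a, b, c}`, each of them is one of `a`, `b`, `c`. -/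
lemma mem_of_insert_toFinset_eq {W : Type*} [DecidableEq W] {p u v a b c : W}
    (h : insert p s(u, v).toFinset = ({a, b, c} : Finset W)) :
    (p = a ∨ p = b ∨ p = c) ∧ (u = a ∨ u = b ∨ u = c) ∧ (v = a ∨ v = b ∨ v = c) := by
  have hp := Finset.ext_iff.1 h p
  have hu := Finset.ext_iff.1 h u
  have hv := Finset.ext_iff.1 h v
  simp at hp hu hv
  exact ⟨hp, hu, hv⟩

/-- In a finite signed complete graph,
`∑_p |T_p⁺| = 2 |𝒯(Ĝ)|` and `∑_p |T_p⁻| = |𝒯(Ĝ)|`, where `𝒯(Ĝ)` is the set of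
bad triangles. -/
theorem stmt19 {W : Type*} [Fintype W] [DecidableEq W]
    (pos : W → W → Prop) (hsym : ∀ u v : W, pos u v → pos v u)
    (hirr : ∀ u : W, ¬ pos u u) :
    (∑ p : W, (Finset.univ.filter fun e : Sym2 W => ∃ u v : W, e = s(u, v) ∧
          pos u v ∧ pos p u ∧ (p ≠ v ∧ ¬ pos p v)).card =
        2 * (Finset.univ.filter fun t : Finset W => ∃ a b c : W, t = {a, b, c} ∧
          a ≠ b ∧ b ≠ c ∧ a ≠ c ∧ pos a b ∧ pos b c ∧ ¬ pos a c).card) ∧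
      ∑ p : W, (Finset.univ.filter fun e : Sym2 W => ∃ u v : W, e = s(u, v) ∧
          (u ≠ v ∧ ¬ pos u v) ∧ pos p u ∧ pos p v).card =
        (Finset.univ.filter fun t : Finset W => ∃ a b c : W, t = {a, b, c} ∧
          a ≠ b ∧ b ≠ c ∧ a ≠ c ∧ pos a b ∧ pos b c ∧ ¬ pos a c).card := by
  constructor
  · apply sum_card_eq_mul_of_fibers
    · intro p e he
      simp only [Finset.mem_filter, Finset.mem_univ, true_and] at he ⊢
      obtain ⟨u, v, rfl, huv, hpu, hpv, hn⟩ := he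
      refine ⟨p, u, v, ?_, ?_, ?_, hpv, hpu, huv, hn⟩
      · ext x; simp
      · rintro rfl; exact hirr _ hpu
      · rintro rfl; exact hirr _ huv
    · intro t ht
      simp only [Finset.mem_filter, Finset.mem_univ, true_and] at ht ⊢
      obtain ⟨a, b, c, rfl, hab, hbc, hac, pab, pbc, nac⟩ := ht
      have nca : ¬ pos c a := fun h => nac (hsym _ _ h)
      have pba := hsym _ _ pab
      have pcb := hsym _ _ pbc
      refine ⟨{⟨a, s(b, c)⟩, ⟨c, s(b, a)⟩}, ?_, ?_⟩
      · rw [Finset.card_pair]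
        intro h
        exact hac (congrArg Sigma.fst h)
      intro p e
      simp only [Finset.mem_insert, Finset.mem_singleton, Sigma.mk.injEq, heq_eq_eq]
      constructor
      · rintro (⟨rfl, rfl⟩ | ⟨rfl, rfl⟩)
        · exact ⟨⟨b, c, rfl, pbc, pab, hac, nac⟩, by ext x; simp⟩
        · exact ⟨⟨b, a, rfl, pba, pcb, hac.symm, nca⟩, by ext x; simp; tauto⟩
      · rintro ⟨⟨u, v, rfl, huv, hpu, hpv, hn⟩, h⟩
        -- all assignments of `p, u, v` to `a, b, c` other than `(a, b, c)` and `(c, b, a)`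
        -- contradict `p ≠ v` or the signs of the edges
        obtain ⟨rfl | rfl | rfl, rfl | rfl | rfl, rfl | rfl | rfl⟩ :=
          mem_of_insert_toFinset_eq h <;> simp_all
  · rw [← one_mul (Finset.card _)]
    apply sum_card_eq_mul_of_fibers
    · intro p e he
      simp only [Finset.mem_filter, Finset.mem_univ, true_and] at he ⊢
      obtain ⟨u, v, rfl, ⟨huv, hn⟩, hpu, hpv⟩ := he
      refine ⟨u, p, v, ?_, ?_, ?_, huv, hsym _ _ hpu, hpv, hn⟩
      · ext x; simp; tauto
      · rintro rfl; exact hirr _ hpu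
      · rintro rfl; exact hirr _ hpv
    · intro t ht
      simp only [Finset.mem_filter, Finset.mem_univ, true_and] at ht ⊢
      obtain ⟨a, b, c, rfl, hab, hbc, hac, pab, pbc, nac⟩ := ht
      have nca : ¬ pos c a := fun h => nac (hsym _ _ h)
      have pba := hsym _ _ pab
      have pcb := hsym _ _ pbc
      refine ⟨{⟨b, s(a, c)⟩}, Finset.card_singleton _, ?_⟩
      intro p e
      simp only [Finset.mem_singleton, Sigma.mk.injEq, heq_eq_eq]
      constructor
      · rintro ⟨rfl, rfl⟩
        exact ⟨⟨a, c, rfl, ⟨hac, nac⟩, pba, pbc⟩, by ext x; simp; tauto⟩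
      · rintro ⟨⟨u, v, rfl, ⟨huv, hn⟩, hpu, hpv⟩, h⟩
        -- `uv` is the negative edge `ac` in one of its two orientations, so `p = b`
        obtain ⟨rfl | rfl | rfl, rfl | rfl | rfl, rfl | rfl | rfl⟩ :=
          mem_of_insert_toFinset_eq h <;> simp_all

end CCC
end
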